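/- For each integer n ≥ 3, if A is a BCK-algebra of order n with |C(A)| = 3n − 2 (the minimum number of commuting pairs), then the partial order on A given by x ≤ y iff x·y = 0 is a linear order. -/

import Mathlib

/-!
The `3n - 2` pairs `(x, x)`, `(0, x)`, `(x, 0)` always commute, so at the minimum they are the only
commuting pairs. Now `x · (x · (x · y)) = x · y` and `x · y ≤ x` imply that `x · y` commutes
with `x`; hence `x · y = 0` or `x · y = x` for all `x, y`. If `x` and `y` were incomparable, then
`x · y = x` and `y · x = y`, so both meets would be `0`: the pair `(x, y)` would commute,
although `x ≠ y` and both are nonzero.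
-/

/-- A BCK-algebra: an algebra `⟨α; ⋆, 0⟩` of type (2,0) satisfying (BCK1)–(BCK5). -/
class BCK (α : Type*) extends Zero α where
  star : α → α → α
  bck1 : ∀ x y z : α, star (star (star x y) (star x z)) (star z y) = 0
  bck2 : ∀ x y : α, star (star x (star x y)) y = 0
  bck3 : ∀ x : α, star x x = 0
  bck4 : ∀ x : α, star 0 x = 0
  bck5 : ∀ x y : α, star x y = 0 → star y x = 0 → x = y
open BCK
/-- The BCK-meet `x ∧ y := y · (y · x)`. -/
def BCK.meet {α : Type*} [BCK α] (x y : α) : α := star y (star y x)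
/-- The set of commuting pairs `C(A) = {(x,y) : x ∧ y = y ∧ x}` of a finite
BCK-algebra, as a `Finset`, where `x ∧ y := y · (y · x)`. -/
def commPairs (α : Type*) [Fintype α] [DecidableEq α] [BCK α] : Finset (α × α) :=
  Finset.univ.filter fun p : α × α => meet p.1 p.2 = meet p.2 p.1

theorem BCK.eq_zero_of_star_zero {α : Type*} [BCK α] {x : α} (h : star x 0 = 0) : x = 0 :=
  bck5 x 0 h (bck4 x)

theorem BCK.star_zero {α : Type*} [BCK α] (x : α) : star x 0 = x := by
  refine bck5 _ _ ?_ (eq_zero_of_star_zero (bck2 x 0))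
  simpa only [bck3] using bck2 x x

theorem BCK.star_le {α : Type*} [BCK α] (x y : α) : star (star x y) x = 0 := by
  have h := bck1 x y 0
  rwa [bck4, star_zero, star_zero] at h

theorem BCK.star_anti {α : Type*} [BCK α] (x : α) {y z : α} (h : star z y = 0) :
    star (star x y) (star x z) = 0 := by
  have h' := bck1 x y z
  rw [h] at h'
  exact eq_zero_of_star_zero h'

theorem BCK.star_star_star {α : Type*} [BCK α] (x y : α) :
    star x (star x (star x y)) = star x y :=
  bck5 _ _ (bck2 x (star x y)) (star_anti x (bck2 x y))

/-- Both meets equal `x · y`; this supplies a possibly nontrivial commuting pair for all `x, y`. -/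
theorem BCK.meet_self_star {α : Type*} [BCK α] (x y : α) :
    meet x (star x y) = meet (star x y) x := by
  simp only [meet, star_star_star, star_le, star_zero]

theorem BCK.meet_zero_comm {α : Type*} [BCK α] (x : α) : meet x 0 = meet 0 x := by
  simp only [meet, star_zero, bck4, bck3]

/-- The pairs that commute in every BCK-algebra, split into the diagonal and the two axes
without the origin. -/
def trivialPairs (α : Type*) [Fintype α] [DecidableEq α] [Zero α] : Finset (α × α) :=
  Finset.univ.diag ∪ ({0} ×ˢ Finset.univ.erase 0 ∪ Finset.univ.erase 0 ×ˢ {0})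

theorem card_trivialPairs (α : Type*) [Fintype α] [DecidableEq α] [Zero α] :
    (trivialPairs α).card = 3 * Fintype.card α - 2 := by
  have hpos : 0 < Fintype.card α := Fintype.card_pos_iff.mpr ⟨0⟩
  rw [trivialPairs, Finset.card_union_of_disjoint, Finset.card_union_of_disjoint]
  · simp only [Finset.diag_card, Finset.card_product, Finset.card_singleton,
      Finset.card_erase_of_mem (Finset.mem_univ _), Finset.card_univ]
    omega
  · rw [Finset.disjoint_left]
    rintro ⟨x, y⟩ h h'
    simp only [Finset.mem_union, Finset.mem_diag, Finset.mem_product, Finset.mem_singleton,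
      Finset.mem_erase, Finset.mem_univ, and_true, true_and] at h h'
    grind
  · rw [Finset.disjoint_left]
    rintro ⟨x, y⟩ h h'
    simp only [Finset.mem_union, Finset.mem_diag, Finset.mem_product, Finset.mem_singleton,
      Finset.mem_erase, Finset.mem_univ, and_true, true_and] at h h'
    grind

theorem trivialPairs_subset_commPairs (α : Type*) [Fintype α] [DecidableEq α] [BCK α] :
    trivialPairs α ⊆ commPairs α := by
  rintro ⟨x, y⟩ h
  simp only [trivialPairs, Finset.mem_union, Finset.mem_diag, Finset.mem_product,
    Finset.mem_singleton] at h
  simp only [commPairs, Finset.mem_filter, Finset.mem_univ, true_and]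
  rcases h with ⟨-, rfl⟩ | ⟨rfl, -⟩ | ⟨-, rfl⟩
  · rfl
  · exact (meet_zero_comm y).symm
  · exact meet_zero_comm x

/-- For each `n ≥ 3`, if `A` is a BCK-algebra of order `n` with `|C(A)| = 3n − 2`
(the minimum number of commuting pairs), then the partial order on `A` given by
`x ≤ y ↔ x · y = 0` is a linear order: any two elements are comparable. -/
theorem min_commuting_degree_linear {α : Type*} [Fintype α] [DecidableEq α] [BCK α]
    (n : ℕ) (hn : 3 ≤ n) (hcard : Fintype.card α = n)
    (hmin : (commPairs α).card = 3 * n - 2) :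
    ∀ x y : α, star x y = 0 ∨ star y x = 0 := by
  have heq : trivialPairs α = commPairs α :=
    Finset.eq_of_subset_of_card_le (trivialPairs_subset_commPairs α)
      (by rw [hmin, card_trivialPairs, hcard])
  have key : ∀ x y : α, meet x y = meet y x → x = y ∨ x = 0 ∨ y = 0 := by
    intro x y h
    have hm : (x, y) ∈ trivialPairs α := by
      rw [heq]
      simpa [commPairs] using h
    simp only [trivialPairs, Finset.mem_union, Finset.mem_diag, Finset.mem_product,
      Finset.mem_singleton] at hm
    tauto
  have zero_or_self : ∀ x y : α, star x y = 0 ∨ star x y = x := by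
    intro x y
    rcases key _ _ (meet_self_star x y) with h | h | h
    · exact Or.inr h.symm
    · exact Or.inl (by rw [h, bck4])
    · exact Or.inl h
  intro x y
  rcases zero_or_self x y with hxy | hxy
  · exact Or.inl hxy
  rcases zero_or_self y x with hyx | hyx
  · exact Or.inr hyx
  have hcomm : meet x y = meet y x := by
    simp only [meet, hxy, hyx, bck3]
  rcases key x y hcomm with rfl | rfl | rfl
  · exact Or.inl (bck3 _)
  · exact Or.inl (bck4 _)
  · exact Or.inr (bck4 _)
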